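/- Let a, b, x, y be complex numbers with a ≠ 0, b ≠ 0, a² + b² ≠ 0, 1 + x ≠ 0, 1 + y ≠ 0, and let tx, ty, sx, sy be complex numbers with tx² = x, ty² = y, sx² = (a⁴ + b⁴)x + a²b²(1 + x²), and sy² = (a⁴ + b⁴)y + a²b²(1 + y²). Define the 4×4 complex matrices A(a,b,x,y) with rows (1/(4a²), y/(4a²), x/(4a²), xy/(4a²)), (1/(4ab), 1/(4ab), x/(4ab), x/(4ab)), (1/(4ab), y/(4ab), 1/(4ab), y/(4ab)), (1/(4b²), 1/(4b²), 1/(4b²), 1/(4b²)), and C(c,d,x,y) = (1/(c²+d²)) times the matrix with rows (d², cdy, cdx, c²xy), (d², cd, cdx, c²x), (d², cdy, cd, c²y), (d², cd, cd, c²), and set M = A(a,b,x,y) · C(1/(2a), 1/(2b), x, y) · A(1/(2a), 1/(2b), x, y) · C(a,b,x,y). Then for each i,j ∈ {0,1}, setting λ = ((a²+b²)·tx − (−1)^i·sx)² · ((a²+b²)·ty − (−1)^j·sy)² / (4a²b²(a²+b²)²), u = ((b²−a²)·x − (−1)^i·tx·sx)/(a·b·(1+x)), and v = ((b²−a²)·y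 − (−1)^j·ty·sy)/(a·b·(1+y)), the vector (u·v, u, v, 1) is an eigenvector of M with eigenvalue λ, i.e. M·(u·v, u, v, 1)ᵀ = λ·(u·v, u, v, 1)ᵀ. -/

import Mathlib

/-- The matrix `A` acts on pure tensors factor by factor. -/
lemma A_tensor (x y p r u u' v v' : ℂ) (hp : p ≠ 0) (hr : r ≠ 0) :
    (!![1 / (4 * p ^ 2), y / (4 * p ^ 2), x / (4 * p ^ 2), x * y / (4 * p ^ 2);
         1 / (4 * p * r), 1 / (4 * p * r), x / (4 * p * r), x / (4 * p * r);
         1 / (4 * p * r), y / (4 * p * r), 1 / (4 * p * r), y / (4 * p * r);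
         1 / (4 * r ^ 2), 1 / (4 * r ^ 2), 1 / (4 * r ^ 2), 1 / (4 * r ^ 2)] :
      Matrix (Fin 4) (Fin 4) ℂ).mulVec ![u * v, u * v', u' * v, u' * v'] =
    (1 / 4 : ℂ) • ![((u + x * u') / p) * ((v + y * v') / p), ((u + x * u') / p) * ((v + v') / r),
      ((u + u') / r) * ((v + y * v') / p), ((u + u') / r) * ((v + v') / r)] := by
  ext k
  fin_cases k <;> simp [Matrix.mulVec, dotProduct, Fin.sum_univ_four] <;> field_simp <;> ring

/-- The matrix `C` acts on pure tensors factor by factor. -/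
lemma C_tensor (x y c d u u' v v' : ℂ) :
    ((c ^ 2 + d ^ 2)⁻¹ •
        !![d ^ 2, c * d * y, c * d * x, c ^ 2 * x * y;
           d ^ 2, c * d, c * d * x, c ^ 2 * x;
           d ^ 2, c * d * y, c * d, c ^ 2 * y;
           d ^ 2, c * d, c * d, c ^ 2] :
      Matrix (Fin 4) (Fin 4) ℂ).mulVec ![u * v, u * v', u' * v, u' * v'] =
    (c ^ 2 + d ^ 2)⁻¹ • ![(d * u + c * x * u') * (d * v + c * y * v'),
      (d * u + c * x * u') * (d * v + c * v'),
      (d * u + c * u') * (d * v + c * y * v'), (d * u + c * u') * (d * v + c * v')] := by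
  rw [Matrix.smul_mulVec]
  congr 1
  ext k
  fin_cases k <;> simp [Matrix.mulVec, dotProduct, Fin.sum_univ_four] <;> ring

/-- First component of the one-variable eigenvector equation. -/
lemma one_var (a b x t s u : ℂ) (ha : a ≠ 0) (hb : b ≠ 0) (hx : 1 + x ≠ 0) (ht : t ^ 2 = x)
    (hs : s ^ 2 = (a ^ 4 + b ^ 4) * x + a ^ 2 * b ^ 2 * (1 + x ^ 2))
    (hu : u = ((b ^ 2 - a ^ 2) * x - t * s) / (a * b * (1 + x)))
    (p1 q1 p2 q2 p3 q3 : ℂ)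
    (hp1 : p1 = b * u + a * x * 1) (hq1 : q1 = b * u + a * 1)
    (hp2 : p2 = (p1 + x * q1) / (1 / (2 * a))) (hq2 : q2 = (p1 + q1) / (1 / (2 * b)))
    (hp3 : p3 = 1 / (2 * b) * p2 + 1 / (2 * a) * x * q2)
    (hq3 : q3 = 1 / (2 * b) * p2 + 1 / (2 * a) * q2) :
    (p3 + x * q3) / a = ((a ^ 2 + b ^ 2) * t - s) ^ 2 / (a ^ 2 * b ^ 2) * u ∧
    (p3 + q3) / b = ((a ^ 2 + b ^ 2) * t - s) ^ 2 / (a ^ 2 * b ^ 2) := by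
  have hu' : u * (a * b * (1 + x)) = (b ^ 2 - a ^ 2) * x - t * s := by
    rw [hu]; field_simp
  have e3 : p3 = a / b * (p1 + x * q1) + b / a * x * (p1 + q1) := by
    rw [hp3, hp2, hq2]; field_simp
  have f3 : q3 = a / b * (p1 + x * q1) + b / a * (p1 + q1) := by
    rw [hq3, hp2, hq2]; field_simp
  subst ht
  constructor
  · rw [e3, f3, hp1, hq1, hu]
    field_simp
    ring_nf
    have h3 : s ^ 3 = s * ((a ^ 4 + b ^ 4) * t ^ 2 + a ^ 2 * b ^ 2 * (1 + (t ^ 2) ^ 2)) := by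
      rw [← hs]; ring
    rw [h3, hs]
    ring
  · rw [e3, f3, hp1, hq1, hu]
    field_simp
    ring_nf
    rw [hs]
    ring

/-- Explicit eigenvectors and eigenvalues of the two-step transfer
matrix `M = A(a,b,x,y)·C(1/(2a),1/(2b),x,y)·A(1/(2a),1/(2b),x,y)·C(a,b,x,y)` of the
boundary generating functions of the two-periodic Aztec diamond. -/
theorem two_periodic_transfer_matrix_eigensystem
    (a b x y tx ty sx sy : ℂ) (ha : a ≠ 0) (hb : b ≠ 0)
    (hab : a ^ 2 + b ^ 2 ≠ 0) (hx : 1 + x ≠ 0) (hy : 1 + y ≠ 0)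
    (htx : tx ^ 2 = x) (hty : ty ^ 2 = y)
    (hsx : sx ^ 2 = (a ^ 4 + b ^ 4) * x + a ^ 2 * b ^ 2 * (1 + x ^ 2))
    (hsy : sy ^ 2 = (a ^ 4 + b ^ 4) * y + a ^ 2 * b ^ 2 * (1 + y ^ 2))
    (i j : ℕ) (hi : i ≤ 1) (hj : j ≤ 1) :
    let A : ℂ → ℂ → Matrix (Fin 4) (Fin 4) ℂ := fun p r =>
      !![1 / (4 * p ^ 2), y / (4 * p ^ 2), x / (4 * p ^ 2), x * y / (4 * p ^ 2);
         1 / (4 * p * r), 1 / (4 * p * r), x / (4 * p * r), x / (4 * p * r);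
         1 / (4 * p * r), y / (4 * p * r), 1 / (4 * p * r), y / (4 * p * r);
         1 / (4 * r ^ 2), 1 / (4 * r ^ 2), 1 / (4 * r ^ 2), 1 / (4 * r ^ 2)]
    let Cm : ℂ → ℂ → Matrix (Fin 4) (Fin 4) ℂ := fun c d =>
      (c ^ 2 + d ^ 2)⁻¹ •
        !![d ^ 2, c * d * y, c * d * x, c ^ 2 * x * y;
           d ^ 2, c * d, c * d * x, c ^ 2 * x;
           d ^ 2, c * d * y, c * d, c ^ 2 * y;
           d ^ 2, c * d, c * d, c ^ 2]
    let M : Matrix (Fin 4) (Fin 4) ℂ :=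
      A a b * Cm (1 / (2 * a)) (1 / (2 * b)) * A (1 / (2 * a)) (1 / (2 * b)) * Cm a b
    let lam : ℂ :=
      ((a ^ 2 + b ^ 2) * tx - (-1) ^ i * sx) ^ 2 *
        ((a ^ 2 + b ^ 2) * ty - (-1) ^ j * sy) ^ 2 /
        (4 * a ^ 2 * b ^ 2 * (a ^ 2 + b ^ 2) ^ 2)
    let u : ℂ := ((b ^ 2 - a ^ 2) * x - (-1) ^ i * tx * sx) / (a * b * (1 + x))
    let v : ℂ := ((b ^ 2 - a ^ 2) * y - (-1) ^ j * ty * sy) / (a * b * (1 + y))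
    M.mulVec ![u * v, u, v, 1] = lam • ![u * v, u, v, 1] := by

  intro A Cm M lam u v
  have hsi : ((-1 : ℂ) ^ i * sx) ^ 2 = (a ^ 4 + b ^ 4) * x + a ^ 2 * b ^ 2 * (1 + x ^ 2) := by
    rw [mul_pow, ← pow_mul, mul_comm i 2, pow_mul]; simpa using hsx
  have hsj : ((-1 : ℂ) ^ j * sy) ^ 2 = (a ^ 4 + b ^ 4) * y + a ^ 2 * b ^ 2 * (1 + y ^ 2) := by
    rw [mul_pow, ← pow_mul, mul_comm j 2, pow_mul]; simpa using hsy
  have hu : u = ((b ^ 2 - a ^ 2) * x - tx * ((-1) ^ i * sx)) / (a * b * (1 + x)) := by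
    simp only [u]; ring
  have hv : v = ((b ^ 2 - a ^ 2) * y - ty * ((-1) ^ j * sy)) / (a * b * (1 + y)) := by
    simp only [v]; ring
  obtain ⟨X1, X2⟩ := one_var a b x tx _ u ha hb hx htx hsi hu _ _ _ _ _ _ rfl rfl rfl rfl rfl rfl
  obtain ⟨Y1, Y2⟩ := one_var a b y ty _ v ha hb hy hty hsj hv _ _ _ _ _ _ rfl rfl rfl rfl rfl rfl
  have h0 : (![u * v, u, v, 1] : Fin 4 → ℂ) = ![u * v, u * 1, 1 * v, 1 * 1] := by simp
  have ha' : 1 / (2 * a) ≠ 0 := by simp [ha]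
  have hb' : 1 / (2 * b) ≠ 0 := by simp [hb]
  have hsum : ((1 / (2 * a)) ^ 2 + (1 / (2 * b)) ^ 2)⁻¹ =
      4 * a ^ 2 * b ^ 2 / (a ^ 2 + b ^ 2) := by
    have : (1 / (2 * a)) ^ 2 + (1 / (2 * b)) ^ 2 = (a ^ 2 + b ^ 2) / (4 * a ^ 2 * b ^ 2) := by
      field_simp; ring
    rw [this, inv_div]
  simp only [M, A, Cm]
  rw [← Matrix.mulVec_mulVec, ← Matrix.mulVec_mulVec, ← Matrix.mulVec_mulVec, h0,
    C_tensor, Matrix.mulVec_smul, A_tensor _ _ _ _ _ _ _ _ ha' hb']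
  simp only [Matrix.mulVec_smul]
  rw [C_tensor]
  simp only [Matrix.mulVec_smul]
  rw [A_tensor _ _ _ _ _ _ _ _ ha hb, X1, X2, Y1, Y2, hsum]
  clear_value u v
  ext k
  fin_cases k <;> simp [lam] <;> field_simp <;> ring
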